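/- arXiv:1802.05507 — 2 statements merged into one kernel-verified Lean document; each statement's English description precedes it below -/
import Mathlib

section
/- Let B ∈ M₄(ℝ) satisfy Bᵀ ηₗ B = ηₗ. Then for all V, V₀ ∈ ℝ⁴ one has A(B;V₀) · 𝔞(V) = 𝔞(BV + V₀). Hence the identification V ↦ [𝔞(V)] of Minkowski 4-space with the space Q_Σ of oriented spheres is equivariant with respect to the action of the Poincaré group on ℝ⁴ and of the Laguerre group on Q_Σ. -/
open Matrix

/-- The Lorentz scalar product on `ℝ⁴`: `(V,W) = −V⁰W⁰ + V¹W¹ + V²W² + V³W³`. -/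
def mprod (V W : Fin 4 → ℝ) : ℝ :=
  -(V 0 * W 0) + V 1 * W 1 + V 2 * W 2 + V 3 * W 3

/-- The Gram matrix `η` of the signature-(4,2) scalar product
`⟨𝔞,𝔟⟩ = −(𝔞⁰𝔟⁵ + 𝔞⁵𝔟⁰) − (𝔞¹𝔟⁴ + 𝔞⁴𝔟¹) + 𝔞²𝔟² + 𝔞³𝔟³` on `ℝ⁶`. -/
def etaM : Matrix (Fin 6) (Fin 6) ℝ :=
  !![0, 0, 0, 0, 0, -1;
     0, 0, 0, 0, -1, 0;
     0, 0, 1, 0, 0, 0;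
     0, 0, 0, 1, 0, 0;
     0, -1, 0, 0, 0, 0;
     -1, 0, 0, 0, 0, 0]

/-- The Gram matrix `ηₗ = diag(−1,1,1,1)` of the Lorentz product on `ℝ⁴`. -/
def etaL : Matrix (Fin 4) (Fin 4) ℝ :=
  !![-1, 0, 0, 0;
     0, 1, 0, 0;
     0, 0, 1, 0;
     0, 0, 0, 1]

/-- The matrix `K`. -/
noncomputable def Kmat : Matrix (Fin 4) (Fin 4) ℝ :=
  !![1 / Real.sqrt 2, 1 / Real.sqrt 2, 0, 0;
     0, 0, 1, 0;
     0, 0, 0, 1;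
     1 / Real.sqrt 2, -(1 / Real.sqrt 2), 0, 0]

/-- The matrix `K⁻¹`. -/
noncomputable def KmatInv : Matrix (Fin 4) (Fin 4) ℝ :=
  !![1 / Real.sqrt 2, 0, 0, 1 / Real.sqrt 2;
     1 / Real.sqrt 2, 0, 0, -(1 / Real.sqrt 2);
     0, 1, 0, 0;
     0, 0, 1, 0]

/-- The row vector `*Ṽ = (−Ṽ³, Ṽ¹, Ṽ², −Ṽ⁰)`, acting on `W` by
`*Ṽ(W) = −(Ṽ⁰W³ + Ṽ³W⁰) + Ṽ¹W¹ + Ṽ²W²`. -/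
def starV (Vt : Fin 4 → ℝ) : Fin 4 → ℝ := ![-(Vt 3), Vt 1, Vt 2, -(Vt 0)]

/-- The element `A(B;V) ∈ M₆(ℝ)` of the Laguerre group: the block matrix with block
rows `(1, 0, 0)`, `(Ṽ, B̃, 0)`, `((V,V)/2, *Ṽ·B̃, 1)`, where `Ṽ = KV`, `B̃ = KBK⁻¹`. -/
noncomputable def AofBV (B : Matrix (Fin 4) (Fin 4) ℝ) (V : Fin 4 → ℝ) :
    Matrix (Fin 6) (Fin 6) ℝ := fun i j =>
  let Vt : Fin 4 → ℝ := Kmat.mulVec V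
  let Bt : Matrix (Fin 4) (Fin 4) ℝ := Kmat * B * KmatInv
  if hi0 : i.val = 0 then (if j.val = 0 then 1 else 0)
  else if hi : i.val ≤ 4 then
    if hj0 : j.val = 0 then Vt ⟨i.val - 1, by omega⟩
    else if hj : j.val ≤ 4 then Bt ⟨i.val - 1, by omega⟩ ⟨j.val - 1, by omega⟩
    else 0
  else
    if hj0 : j.val = 0 then mprod V V / 2
    else if hj : j.val ≤ 4 then Matrix.vecMul (starV Vt) Bt ⟨j.val - 1, by omega⟩
    else 1

/-- The basis vector `ε₅` of `ℝ⁶`. -/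
def eps5 : Fin 6 → ℝ := ![0, 0, 0, 0, 0, 1]

/-- `𝔞(V) = (1, Ṽ⁰, Ṽ¹, Ṽ², Ṽ³, (V,V)/2)` where `Ṽ = KV`. -/
noncomputable def aVec (V : Fin 4 → ℝ) : Fin 6 → ℝ :=
  ![1, Kmat.mulVec V 0, Kmat.mulVec V 1, Kmat.mulVec V 2, Kmat.mulVec V 3,
    mprod V V / 2]

/-- `KmatInv` is a left inverse of `Kmat`. -/
theorem KmatInv_mul_Kmat : KmatInv * Kmat = 1 := by
  have h : (√2 : ℝ)⁻¹ * (√2)⁻¹ = 1 / 2 := by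
    rw [← mul_inv, Real.mul_self_sqrt (by norm_num)]; norm_num
  ext i j
  fin_cases i <;> fin_cases j <;>
    simp [KmatInv, Kmat, Matrix.mul_apply, Fin.sum_univ_four, h] <;> norm_num

theorem starV_Kmat_dotProduct (V W : Fin 4 → ℝ) :
    starV (Kmat *ᵥ V) ⬝ᵥ (Kmat *ᵥ W) = mprod V W := by
  have h : (√2 : ℝ)⁻¹ * (√2)⁻¹ = 1 / 2 := by
    rw [← mul_inv, Real.mul_self_sqrt (by norm_num)]; norm_num
  simp only [starV, Kmat, mprod, dotProduct, Matrix.mulVec, Fin.sum_univ_four]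
  simp
  linear_combination (-2 * V 0 * W 0 + 2 * V 1 * W 1) * h

theorem mprod_eq_dotProduct (V W : Fin 4 → ℝ) : mprod V W = V ⬝ᵥ (etaL *ᵥ W) := by
  simp [mprod, etaL, dotProduct, Matrix.mulVec, Fin.sum_univ_four]

theorem mprod_mulVec {B : Matrix (Fin 4) (Fin 4) ℝ} (hB : Bᵀ * etaL * B = etaL)
    (V W : Fin 4 → ℝ) : mprod (B *ᵥ V) (B *ᵥ W) = mprod V W := by
  rw [mprod_eq_dotProduct, mprod_eq_dotProduct, ← Matrix.vecMul_transpose,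
    ← Matrix.dotProduct_mulVec, Matrix.mulVec_mulVec, Matrix.mulVec_mulVec, hB]

theorem mprod_add_self (V W : Fin 4 → ℝ) :
    mprod (V + W) (V + W) = mprod V V + 2 * mprod W V + mprod W W := by
  simp only [mprod, Pi.add_apply]
  ring

/-- Conjugating by `Kmat` intertwines `B̃` with `B`. -/
theorem conj_Kmat_mulVec (B : Matrix (Fin 4) (Fin 4) ℝ) (V : Fin 4 → ℝ) :
    (Kmat * B * KmatInv) *ᵥ (Kmat *ᵥ V) = Kmat *ᵥ (B *ᵥ V) := by
  rw [Matrix.mulVec_mulVec, Matrix.mul_assoc, KmatInv_mul_Kmat, Matrix.mul_one,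
    Matrix.mulVec_mulVec]

/-- If `Bᵀ ηₗ B = ηₗ`, then `A(B;V₀) · 𝔞(V) = 𝔞(BV + V₀)` for all `V, V₀ ∈ ℝ⁴`:
the identification `V ↦ [𝔞(V)]` of Minkowski 4-space with the space `Q_Σ` of
oriented spheres is equivariant for the Poincaré group action on `ℝ⁴` and the
Laguerre group action on `Q_Σ`. -/
theorem stmt11 (B : Matrix (Fin 4) (Fin 4) ℝ) (hB : Bᵀ * etaL * B = etaL)
    (V V₀ : Fin 4 → ℝ) :
    (AofBV B V₀).mulVec (aVec V) = aVec (B.mulVec V + V₀) := by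
  have middle (i : Fin 4) : Kmat.mulVec (B.mulVec V + V₀) i = Kmat.mulVec V₀ i +
      ∑ j, (Kmat * B * KmatInv) i j * Kmat.mulVec V j := by
    rw [Matrix.mulVec_add, ← conj_Kmat_mulVec, add_comm]
    rfl
  have last : mprod (B.mulVec V + V₀) (B.mulVec V + V₀) = mprod V V +
      2 * (∑ j, Matrix.vecMul (starV (Kmat.mulVec V₀)) (Kmat * B * KmatInv) j *
        Kmat.mulVec V j) + mprod V₀ V₀ := by
    rw [mprod_add_self, mprod_mulVec hB, ← starV_Kmat_dotProduct V₀, ← conj_Kmat_mulVec,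
      Matrix.dotProduct_mulVec]
    rfl
  simp only [Fin.sum_univ_four] at middle last
  ext i
  rw [Matrix.mulVec, dotProduct, Fin.sum_univ_six]
  fin_cases i
  · simp [AofBV, aVec]
  iterate 4
    · simp [AofBV, aVec, middle]
      ring
  · simp [AofBV, aVec, last]
    ring
end

section
/- Let A ∈ M₆(ℝ) satisfy Aᵀ η A = η and A ε₅ = ε₅. Then there exist a unique B ∈ M₄(ℝ) with Bᵀ ηₗ B = ηₗ and a unique V ∈ ℝ⁴ such that A = A(B;V). Moreover det A = det B and −⟨A(ε₁+ε₄), ε₁+ε₄⟩ = 2 B⁰⁰. Consequently (B;V) ↦ A(B;V) is a bijection from the restricted Poincaré group {(B;V) : Bᵀηₗ B = ηₗ, det B = 1, B⁰⁰ ≥ 1, V ∈ ℝ⁴} onto the Laguerre group L = {A : AᵀηA = η, det A = 1, −⟨A(ε₁+ε₄), ε₁+ε₄⟩ ≥ 2, Aε₅ = ε₅}. -/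
open Matrix

/-- The scalar product of signature (4,2) on `ℝ⁶`. -/
def lprod (a b : Fin 6 → ℝ) : ℝ :=
  -(a 0 * b 5 + a 5 * b 0) - (a 1 * b 4 + a 4 * b 1) + a 2 * b 2 + a 3 * b 3

/-- The vector `ε₁ + ε₄` of `ℝ⁶`. -/
def eps14 : Fin 6 → ℝ := ![0, 1, 0, 0, 1, 0]

/-- The inclusion of the indices of the middle `4 × 4` block into those of `ℝ⁶`. -/
def midIndex (i : Fin 4) : Fin 6 := i.castSucc.succ

/-- The Gram matrix of the Lorentz product in the null coordinates `Ṽ = KV`. -/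
def etaNull : Matrix (Fin 4) (Fin 4) ℝ :=
  !![0, 0, 0, -1;
     0, 1, 0, 0;
     0, 0, 1, 0;
     -1, 0, 0, 0]

theorem forall_index_iff {P : Fin 6 → Prop} :
    (∀ i, P i) ↔ P 0 ∧ (∀ i, P (midIndex i)) ∧ P 5 := by
  refine ⟨fun h => ⟨h _, fun _ => h _, h _⟩, fun ⟨h0, hm, h5⟩ i => ?_⟩
  refine Fin.cases h0 (fun i => ?_) i
  exact Fin.lastCases h5 hm i

theorem inv_sqrt_two_mul_self : (√2)⁻¹ * (√2)⁻¹ = (1 / 2 : ℝ) := by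
  rw [← mul_inv, Real.mul_self_sqrt zero_le_two, one_div]

theorem Kmat_mul_KmatInv : Kmat * KmatInv = 1 := by
  ext i j
  fin_cases i <;> fin_cases j <;>
    simp [Kmat, KmatInv, Matrix.mul_apply, Fin.sum_univ_four, inv_sqrt_two_mul_self] <;>
    norm_num

theorem Kmat_transpose_mul_etaNull_mul : Kmatᵀ * etaNull * Kmat = etaL := by
  ext i j
  fin_cases i <;> fin_cases j <;>
    simp [Kmat, etaNull, etaL, Matrix.mul_apply, Fin.sum_univ_four, inv_sqrt_two_mul_self] <;>
    norm_num

theorem starV_eq_vecMul (u : Fin 4 → ℝ) : starV u = u ᵥ* etaNull := by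
  ext j
  fin_cases j <;> simp [starV, etaNull, Matrix.vecMul, dotProduct, Fin.sum_univ_four]

theorem lprod_comm (a b : Fin 6 → ℝ) : lprod a b = lprod b a := by
  simp only [lprod]
  ring

theorem starV_Kmat_dotProduct_self (V : Fin 4 → ℝ) :
    starV (Kmat *ᵥ V) ⬝ᵥ (Kmat *ᵥ V) = mprod V V := by
  simp [starV, Kmat, mprod, dotProduct, Matrix.mulVec, Fin.sum_univ_four]
  linear_combination (-2 * (V 0 ^ 2 - V 1 ^ 2)) * inv_sqrt_two_mul_self

theorem lprod_eq_starV_dotProduct (a b : Fin 6 → ℝ) :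
    lprod a b = -(a 0 * b 5 + a 5 * b 0) +
      starV (fun i => a (midIndex i)) ⬝ᵥ (fun i => b (midIndex i)) := by
  have h1 : midIndex 0 = 1 := rfl
  have h2 : midIndex 1 = 2 := rfl
  have h3 : midIndex 2 = 3 := rfl
  have h4 : midIndex 3 = 4 := rfl
  simp [lprod, starV, dotProduct, Fin.sum_univ_four, h1, h2, h3, h4]
  ring

/-- The congruence `Aᵀ η A` is the table of scalar products of the columns of `A`. -/
theorem transpose_mul_etaM_mul_apply (A : Matrix (Fin 6) (Fin 6) ℝ) (i j : Fin 6) :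
    (Aᵀ * etaM * A) i j = lprod (fun k => A k i) (fun k => A k j) := by
  simp [Matrix.mul_apply, Fin.sum_univ_six, etaM, lprod]
  ring

theorem transpose_mul_etaNull_mul_apply (M : Matrix (Fin 4) (Fin 4) ℝ) (i j : Fin 4) :
    (Mᵀ * etaNull * M) i j = starV (fun k => M k i) ⬝ᵥ (fun k => M k j) := by
  rw [starV_eq_vecMul]
  rfl

theorem etaM_zero_last : etaM 0 5 = -1 := rfl

theorem etaM_zero_mid (j : Fin 4) : etaM 0 (midIndex j) = 0 := by
  fin_cases j <;> rfl

theorem etaM_mid_last (j : Fin 4) : etaM (midIndex j) 5 = 0 := by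
  fin_cases j <;> rfl

theorem etaM_mid_mid (i j : Fin 4) : etaM (midIndex i) (midIndex j) = etaNull i j := by
  fin_cases i <;> fin_cases j <;> rfl

theorem etaM_comm (i j : Fin 6) : etaM i j = etaM j i := by
  fin_cases i <;> fin_cases j <;> rfl

/-- `A` preserves `η` as soon as the scalar products of its columns, taken once for each
unordered pair of blocks, are the right ones. -/
theorem transpose_mul_etaM_mul_eq_iff (A : Matrix (Fin 6) (Fin 6) ℝ) :
    Aᵀ * etaM * A = etaM ↔
      lprod (fun k => A k 0) (fun k => A k 0) = 0 ∧
      (∀ j, lprod (fun k => A k 0) (fun k => A k (midIndex j)) = 0) ∧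
      lprod (fun k => A k 0) (fun k => A k 5) = -1 ∧
      (∀ i j, lprod (fun k => A k (midIndex i)) (fun k => A k (midIndex j)) = etaNull i j) ∧
      (∀ i, lprod (fun k => A k (midIndex i)) (fun k => A k 5) = 0) ∧
      lprod (fun k => A k 5) (fun k => A k 5) = 0 := by
  have key : Aᵀ * etaM * A = etaM ↔
      ∀ i j, lprod (fun k => A k i) (fun k => A k j) = etaM i j := by
    simp only [← transpose_mul_etaM_mul_apply, ← Matrix.ext_iff]
  rw [key]
  constructor
  · intro h
    refine ⟨h _ _, fun j => ?_, h _ _, fun i j => ?_, fun i => ?_, h _ _⟩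
    · rw [h, etaM_zero_mid]
    · rw [h, etaM_mid_mid]
    · rw [h, etaM_mid_last]
  · rintro ⟨h00, h0m, h05, hmm, hm5, h55⟩
    simp only [forall_index_iff]
    refine ⟨⟨h00, fun j => ?_, h05⟩, fun i => ⟨?_, fun j => ?_, ?_⟩, ?_, fun j => ?_, h55⟩
    · rw [h0m, etaM_zero_mid]
    · rw [lprod_comm, h0m, etaM_comm, etaM_zero_mid]
    · rw [hmm, etaM_mid_mid]
    · rw [hm5, etaM_mid_last]
    · rw [lprod_comm, h05, etaM_comm, etaM_zero_last]
    · rw [lprod_comm, hm5, etaM_comm, etaM_mid_last]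

section Entries

variable (B : Matrix (Fin 4) (Fin 4) ℝ) (V : Fin 4 → ℝ)

theorem AofBV_zero_zero : AofBV B V 0 0 = 1 := rfl

theorem AofBV_zero_succ (j : Fin 5) : AofBV B V 0 j.succ = 0 := by
  simp [AofBV]

theorem AofBV_zero_mid (j : Fin 4) : AofBV B V 0 (midIndex j) = 0 :=
  AofBV_zero_succ B V j.castSucc

theorem AofBV_zero_last : AofBV B V 0 5 = 0 := rfl

theorem AofBV_mid_zero (i : Fin 4) : AofBV B V (midIndex i) 0 = (Kmat *ᵥ V) i := by
  fin_cases i <;> rfl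

theorem AofBV_mid_mid (i j : Fin 4) :
    AofBV B V (midIndex i) (midIndex j) = (Kmat * B * KmatInv) i j := by
  fin_cases i <;> fin_cases j <;> rfl

theorem AofBV_mid_last (i : Fin 4) : AofBV B V (midIndex i) 5 = 0 := by
  fin_cases i <;> rfl

theorem AofBV_last_zero : AofBV B V 5 0 = mprod V V / 2 := rfl

theorem AofBV_last_mid (j : Fin 4) :
    AofBV B V 5 (midIndex j) = (starV (Kmat *ᵥ V) ᵥ* (Kmat * B * KmatInv)) j := by
  fin_cases j <;> rfl

theorem AofBV_last_last : AofBV B V 5 5 = 1 := rfl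

end Entries

theorem mulVec_eps5 (A : Matrix (Fin 6) (Fin 6) ℝ) : A *ᵥ eps5 = fun i => A i 5 := by
  ext i
  simp [Matrix.mulVec, dotProduct, Fin.sum_univ_six, eps5]

theorem AofBV_mulVec_eps5 (B : Matrix (Fin 4) (Fin 4) ℝ) (V : Fin 4 → ℝ) :
    AofBV B V *ᵥ eps5 = eps5 := by
  rw [mulVec_eps5]
  ext i
  fin_cases i <;> rfl

/-- Conjugation by `K` turns the Lorentz condition into the condition in null coordinates. -/
theorem etaNull_isometry_of_lorentz {B : Matrix (Fin 4) (Fin 4) ℝ} (hB : Bᵀ * etaL * B = etaL) :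
    (Kmat * B * KmatInv)ᵀ * etaNull * (Kmat * B * KmatInv) = etaNull := by
  have hK : Kmatᵀ * (etaNull * Kmat) = etaL := by
    rw [← Matrix.mul_assoc, Kmat_transpose_mul_etaNull_mul]
  calc (Kmat * B * KmatInv)ᵀ * etaNull * (Kmat * B * KmatInv)
      = KmatInvᵀ * (Bᵀ * (Kmatᵀ * (etaNull * Kmat)) * B) * KmatInv := by
        simp only [Matrix.transpose_mul, Matrix.mul_assoc]
    _ = (Kmat * KmatInv)ᵀ * etaNull * (Kmat * KmatInv) := by
        rw [hK, hB, ← hK]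
        simp only [Matrix.transpose_mul, Matrix.mul_assoc]
    _ = etaNull := by simp [Kmat_mul_KmatInv]

theorem lorentz_of_etaNull_isometry {M : Matrix (Fin 4) (Fin 4) ℝ}
    (hM : Mᵀ * etaNull * M = etaNull) :
    (KmatInv * M * Kmat)ᵀ * etaL * (KmatInv * M * Kmat) = etaL := by
  calc (KmatInv * M * Kmat)ᵀ * etaL * (KmatInv * M * Kmat)
      = Kmatᵀ * (Mᵀ * ((Kmat * KmatInv)ᵀ * etaNull * (Kmat * KmatInv)) * M) * Kmat := by
        rw [← Kmat_transpose_mul_etaNull_mul]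
        simp only [Matrix.transpose_mul, Matrix.mul_assoc]
    _ = etaL := by
        simp [Kmat_mul_KmatInv, hM, Kmat_transpose_mul_etaNull_mul]

theorem AofBV_transpose_mul_etaM_mul {B : Matrix (Fin 4) (Fin 4) ℝ} (V : Fin 4 → ℝ)
    (hB : Bᵀ * etaL * B = etaL) : (AofBV B V)ᵀ * etaM * AofBV B V = etaM := by
  have hM := etaNull_isometry_of_lorentz hB
  simp only [transpose_mul_etaM_mul_eq_iff, lprod_eq_starV_dotProduct, AofBV_zero_zero,
    AofBV_zero_mid, AofBV_zero_last, AofBV_mid_zero, AofBV_mid_mid, AofBV_mid_last,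
    AofBV_last_zero, AofBV_last_mid, AofBV_last_last, ← transpose_mul_etaNull_mul_apply, hM]
  refine ⟨?_, fun j => ?_, ?_, fun i j => ?_, fun i => ?_, ?_⟩
  · rw [starV_Kmat_dotProduct_self]
    ring
  · simp [Matrix.vecMul]
  · simp [dotProduct]
  · ring
  · simp [dotProduct]
  · simp [dotProduct]

theorem AofBV_injective {B B' : Matrix (Fin 4) (Fin 4) ℝ} {V V' : Fin 4 → ℝ}
    (h : AofBV B V = AofBV B' V') : B = B' ∧ V = V' := by
  have hV : Kmat *ᵥ V = Kmat *ᵥ V' := by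
    ext i
    rw [← AofBV_mid_zero B V, h, AofBV_mid_zero]
  have hB : Kmat * B * KmatInv = Kmat * B' * KmatInv := by
    ext i j
    rw [← AofBV_mid_mid B V, h, AofBV_mid_mid]
  constructor
  · have := congrArg (fun M => KmatInv * M * Kmat) hB
    simpa only [Matrix.mul_assoc, KmatInv_mul_Kmat, Matrix.mul_one, ← Matrix.mul_assoc KmatInv Kmat,
      Matrix.one_mul] using this
  · simpa [Matrix.mulVec_mulVec, KmatInv_mul_Kmat] using congrArg (KmatInv *ᵥ ·) hV

theorem exists_eq_AofBV {A : Matrix (Fin 6) (Fin 6) ℝ} (hA : Aᵀ * etaM * A = etaM)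
    (h5 : A *ᵥ eps5 = eps5) :
    ∃ (B : Matrix (Fin 4) (Fin 4) ℝ) (V : Fin 4 → ℝ),
      Bᵀ * etaL * B = etaL ∧ A = AofBV B V := by
  have hcol : ∀ i, A i 5 = eps5 i := fun i => by rw [← h5, mulVec_eps5]
  have e0 : eps5 0 = 0 := rfl
  have e5 : eps5 5 = 1 := rfl
  have em : ∀ i, eps5 (midIndex i) = 0 := fun i => by fin_cases i <;> rfl
  rw [transpose_mul_etaM_mul_eq_iff] at hA
  simp only [lprod_eq_starV_dotProduct, hcol, e0, e5, em] at hA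
  obtain ⟨h00, h0m, h05, hmm, hm5, -⟩ := hA
  have a00 : A 0 0 = 1 := by simpa [dotProduct] using h05
  have a0m : ∀ i, A 0 (midIndex i) = 0 := fun i => by simpa [dotProduct] using hm5 i
  simp only [a00, a0m] at h00 h0m hmm
  set M : Matrix (Fin 4) (Fin 4) ℝ := Matrix.of fun i j => A (midIndex i) (midIndex j) with hMdef
  set W : Fin 4 → ℝ := fun i => A (midIndex i) 0 with hWdef
  have hM : Mᵀ * etaNull * M = etaNull := by
    ext i j
    rw [transpose_mul_etaNull_mul_apply, ← hmm i j]
    simp [hMdef]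
  have hconj : Kmat * (KmatInv * M * Kmat) * KmatInv = M := by
    simp only [Matrix.mul_assoc, Kmat_mul_KmatInv, Matrix.mul_one]
    rw [← Matrix.mul_assoc, Kmat_mul_KmatInv, Matrix.one_mul]
  have hW : Kmat *ᵥ (KmatInv *ᵥ W) = W := by
    rw [Matrix.mulVec_mulVec, Kmat_mul_KmatInv, Matrix.one_mulVec]
  refine ⟨KmatInv * M * Kmat, KmatInv *ᵥ W, lorentz_of_etaNull_isometry hM, ?_⟩
  rw [← Matrix.ext_iff]
  simp only [forall_index_iff, AofBV_zero_zero, AofBV_zero_mid, AofBV_zero_last, AofBV_mid_zero,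
    AofBV_mid_mid, AofBV_mid_last, AofBV_last_zero, AofBV_last_mid, AofBV_last_last, hconj,
    ← starV_Kmat_dotProduct_self, hW, a00, a0m, hcol, e0, e5, em]
  refine ⟨by simp, fun i => ⟨rfl, fun j => rfl, trivial⟩, ?_, fun j => ?_, trivial⟩
  · linarith
  · have := h0m j
    simp only [Matrix.vecMul, hMdef, Matrix.of_apply]
    linarith

theorem AofBV_det (B : Matrix (Fin 4) (Fin 4) ℝ) (V : Fin 4 → ℝ) :
    (AofBV B V).det = B.det := by
  have hsub : ((AofBV B V).submatrix Fin.succ Fin.succ).submatrix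
      (Fin.last 4).succAbove (Fin.last 4).succAbove = Kmat * B * KmatInv := by
    ext i j
    rw [← AofBV_mid_mid B V, Fin.succAbove_last]
    rfl
  have hcol (i : Fin 4) : AofBV B V i.castSucc.succ (Fin.last 4).succ = 0 := AofBV_mid_last B V i
  have hlast : AofBV B V (Fin.last 4).succ (Fin.last 4).succ = 1 := rfl
  have hK : Kmat.det * KmatInv.det = 1 := by
    rw [← Matrix.det_mul, Kmat_mul_KmatInv, Matrix.det_one]
  rw [Matrix.det_succ_row_zero, Fin.sum_univ_succ]
  simp only [AofBV_zero_succ, AofBV_zero_zero]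
  rw [Fin.succAbove_zero, Matrix.det_succ_column _ (Fin.last 4), Fin.sum_univ_castSucc,
    hsub]
  simp only [Matrix.submatrix_apply, hcol, hlast, Matrix.det_mul]
  simp
  linear_combination B.det * hK

theorem neg_lprod_AofBV_mulVec_eps14 (B : Matrix (Fin 4) (Fin 4) ℝ) (V : Fin 4 → ℝ) :
    -(lprod (AofBV B V *ᵥ eps14) eps14) = 2 * B 0 0 := by
  have h (i : Fin 4) : (AofBV B V *ᵥ eps14) (midIndex i) =
      (Kmat * B * KmatInv) i 0 + (Kmat * B * KmatInv) i 3 := by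
    rw [← AofBV_mid_mid B V, ← AofBV_mid_mid B V]
    simp [Matrix.mulVec, dotProduct, Fin.sum_univ_six, eps14, midIndex]
  have hl (a : Fin 6 → ℝ) : -(lprod a eps14) = a (midIndex 0) + a (midIndex 3) := by
    simp [lprod, eps14, midIndex]
  rw [hl, h, h]
  simp [Matrix.mul_apply, Matrix.vecMul, dotProduct, Fin.sum_univ_four, Kmat, KmatInv]
  linear_combination 4 * B 0 0 * inv_sqrt_two_mul_self

/-- Every `A ∈ M₆(ℝ)` with `Aᵀ η A = η` and `A ε₅ = ε₅` is of the form `A(B;V)` for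
a unique Lorentz transformation `B` and a unique `V ∈ ℝ⁴`; moreover
`det A(B;V) = det B` and `−⟨A(B;V)(ε₁+ε₄), ε₁+ε₄⟩ = 2 B⁰⁰`. Consequently
`(B;V) ↦ A(B;V)` is a bijection from the restricted Poincaré group onto the
Laguerre group `L`. -/
theorem stmt14 :
    (∀ A : Matrix (Fin 6) (Fin 6) ℝ, Aᵀ * etaM * A = etaM → A.mulVec eps5 = eps5 →
      ∃! BV : Matrix (Fin 4) (Fin 4) ℝ × (Fin 4 → ℝ),
        BV.1ᵀ * etaL * BV.1 = etaL ∧ A = AofBV BV.1 BV.2) ∧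
    (∀ (B : Matrix (Fin 4) (Fin 4) ℝ) (V : Fin 4 → ℝ), Bᵀ * etaL * B = etaL →
      (AofBV B V).det = B.det ∧
      -(lprod ((AofBV B V).mulVec eps14) eps14) = 2 * B 0 0) ∧
    Set.BijOn (fun BV : Matrix (Fin 4) (Fin 4) ℝ × (Fin 4 → ℝ) => AofBV BV.1 BV.2)
      {BV | BV.1ᵀ * etaL * BV.1 = etaL ∧ BV.1.det = 1 ∧ 1 ≤ BV.1 0 0}
      {A | Aᵀ * etaM * A = etaM ∧ A.det = 1 ∧
        2 ≤ -(lprod (A.mulVec eps14) eps14) ∧ A.mulVec eps5 = eps5} := by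
  refine ⟨fun A hA h5 => ?_, fun B V _ => ⟨AofBV_det B V, neg_lprod_AofBV_mulVec_eps14 B V⟩,
    ?_, ?_, ?_⟩
  · obtain ⟨B, V, hB, rfl⟩ := exists_eq_AofBV hA h5
    refine ⟨(B, V), ⟨hB, rfl⟩, ?_⟩
    rintro ⟨B', V'⟩ ⟨-, h⟩
    obtain ⟨rfl, rfl⟩ := AofBV_injective h
    rfl
  · rintro ⟨B, V⟩ ⟨hB, hdet, h0⟩
    refine ⟨AofBV_transpose_mul_etaM_mul V hB, (AofBV_det B V).trans hdet, ?_,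
      AofBV_mulVec_eps5 B V⟩
    rw [neg_lprod_AofBV_mulVec_eps14]
    linarith
  · rintro ⟨B, V⟩ - ⟨B', V'⟩ - h
    obtain ⟨rfl, rfl⟩ := AofBV_injective h
    rfl
  · rintro A ⟨hA, hdet, h2, h5⟩
    obtain ⟨B, V, hB, rfl⟩ := exists_eq_AofBV hA h5
    rw [AofBV_det] at hdet
    rw [neg_lprod_AofBV_mulVec_eps14] at h2
    exact ⟨(B, V), ⟨hB, hdet, by linarith⟩, rfl⟩
end
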